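/- Let μ and ν be probability measures on ℝ^d with finite second moments, let φ_0 be a Brenier potential from μ to ν such that the Brenier map ∇φ_0 is globally L-Lipschitz, and set π_0 := the pushforward of μ by x ↦ (x, ∇φ_0(x)). For ε > 0, let (f_ε, g_ε) be a Schrödinger pair for (μ, ν, ε) with differentiable entropic potential φ_ε := |·|²/2 − f_ε, and let π_ε be the associated entropic optimal plan. Then ∫ |∇φ_ε − ∇φ_0|² dμ ≤ 2L ( ∫ (|x−y|²/2) dπ_ε(x,y) − ∫ (|x−y|²/2) dπ_0(x,y) ). -/

import Mathlib

open MeasureTheory Real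
open scoped RealInnerProductSpace

/-- `(f, g)` is a Schrödinger pair for `(μ, ν, ε)`: both Schrödinger equations hold, with all
the integrals involved finite (integrable nonnegative integrands) and positive. -/
def IsSchrodingerPair {d : ℕ} (μ ν : Measure (EuclideanSpace ℝ (Fin d))) (ε : ℝ)
    (f g : EuclideanSpace ℝ (Fin d) → ℝ) : Prop :=
  Measurable f ∧ Measurable g ∧
  (∀ x, Integrable (fun y => Real.exp ((g y - ‖x - y‖ ^ 2 / 2) / ε)) ν ∧
    0 < ∫ y, Real.exp ((g y - ‖x - y‖ ^ 2 / 2) / ε) ∂ν ∧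
    f x = -ε * Real.log (∫ y, Real.exp ((g y - ‖x - y‖ ^ 2 / 2) / ε) ∂ν)) ∧
  (∀ y, Integrable (fun x => Real.exp ((f x - ‖y - x‖ ^ 2 / 2) / ε)) μ ∧
    0 < ∫ x, Real.exp ((f x - ‖y - x‖ ^ 2 / 2) / ε) ∂μ ∧
    g y = -ε * Real.log (∫ x, Real.exp ((f x - ‖y - x‖ ^ 2 / 2) / ε) ∂μ))

/-- The entropic potential associated to a dual function `f`: `φ = ‖·‖²/2 - f`. -/
noncomputable def entPot {d : ℕ} (f : EuclideanSpace ℝ (Fin d) → ℝ) :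
    EuclideanSpace ℝ (Fin d) → ℝ :=
  fun x => ‖x‖ ^ 2 / 2 - f x

/-- `φ` is a Brenier potential from `μ` to `ν`: convex, differentiable, and its gradient
pushes `μ` forward to `ν`. -/
def IsBrenierPotential {d : ℕ} (μ ν : Measure (EuclideanSpace ℝ (Fin d)))
    (φ : EuclideanSpace ℝ (Fin d) → ℝ) : Prop :=
  ConvexOn ℝ Set.univ φ ∧ Differentiable ℝ φ ∧
  Measure.map (fun x => gradient φ x) μ = ν

/-- The entropic optimal plan `π_ε` associated to a Schrödinger pair `(f, g)`: its density
with respect to `μ ⊗ ν` is `(x,y) ↦ exp((f x + g y - ‖x-y‖²/2)/ε)`. -/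
noncomputable def entPlan {d : ℕ} (μ ν : Measure (EuclideanSpace ℝ (Fin d))) (ε : ℝ)
    (f g : EuclideanSpace ℝ (Fin d) → ℝ) :
    Measure (EuclideanSpace ℝ (Fin d) × EuclideanSpace ℝ (Fin d)) :=
  (μ.prod ν).withDensity
    (fun p => ENNReal.ofReal (Real.exp ((f p.1 + g p.2 - ‖p.1 - p.2‖ ^ 2 / 2) / ε)))

/-!
Let `φ₀*` be the Legendre transform of `φ₀`. Since `∇φ₀` is `L`-Lipschitz, the descent lemma turns
the Fenchel-Young inequality into the quantitative bound
`|y - ∇φ₀ x|² ≤ 2L (φ₀ x + φ₀* y - ⟪x, y⟫)`. The right-hand gap vanishes on the graph of `∇φ₀`, and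
its integral against a plan depends on the plan only through its marginals and its quadratic cost,
so for any plan with the marginals of `π₀` it equals the cost of the plan minus that of `π₀`.

For the entropic plan, `∇φ_ε x` is the barycenter of the conditional law of `y` given `x`: this
law has mass one at every `x`, and perturbing `x` shows by `1 + t ≤ exp t` that the barycenter is a
subgradient of `φ_ε`. By Jensen's inequality, replacing `y` by its barycenter decreases
`∫ |y - ∇φ₀ x|² dπ_ε`.
-/

section GradientInequalities

variable {E : Type*} [NormedAddCommGroup E] [InnerProductSpace ℝ E] [CompleteSpace E]
  {φ : E → ℝ}

lemma hasDerivAt_comp_add_smul {x v : E} {t : ℝ} (hφ : DifferentiableAt ℝ φ (x + t • v)) :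
    HasDerivAt (fun s : ℝ => φ (x + s • v)) ⟪gradient φ (x + t • v), v⟫ t := by
  have hline : HasDerivAt (fun s : ℝ => x + s • v) v t := by
    simpa using ((hasDerivAt_id t).smul_const v).const_add x
  exact hφ.hasGradientAt.hasFDerivAt.comp_hasDerivAt t hline

lemma add_inner_gradient_le_of_convexOn {s : Set E} (hφ : ConvexOn ℝ s φ) {x z : E} (hx : x ∈ s)
    (hz : z ∈ s) (hd : DifferentiableAt ℝ φ x) : φ x + ⟪gradient φ x, z - x⟫ ≤ φ z := by
  have hline := hφ.comp_affineMap (AffineMap.lineMap x z : ℝ →ᵃ[ℝ] E)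
  have hderiv : HasDerivAt (φ ∘ (AffineMap.lineMap x z : ℝ →ᵃ[ℝ] E)) ⟪gradient φ x, z - x⟫ 0 := by
    simpa [Function.comp_def, AffineMap.lineMap_apply, add_comm] using
      hasDerivAt_comp_add_smul (φ := φ) (x := x) (v := z - x) (t := 0) (by simpa using hd)
  have hslope := hline.le_slope_of_hasDerivAt (by simpa using hx) (by simpa using hz) one_pos hderiv
  simp only [slope_def_field, Function.comp_apply, AffineMap.lineMap_apply_one,
    AffineMap.lineMap_apply_zero, sub_zero, div_one] at hslope
  linarith

lemma abs_sub_sub_inner_gradient_le (hφ : Differentiable ℝ φ) {L : NNReal}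
    (hL : LipschitzWith L (gradient φ)) (x z : E) :
    |φ z - φ x - ⟪gradient φ x, z - x⟫| ≤ L / 2 * ‖z - x‖ ^ 2 := by
  set v := z - x
  have hremainder (t : ℝ) : HasDerivAt (fun s : ℝ => φ (x + s • v) - φ x - s * ⟪gradient φ x, v⟫)
      ⟪gradient φ (x + t • v) - gradient φ x, v⟫ t := by
    rw [inner_sub_left]
    exact (((hasDerivAt_comp_add_smul (hφ _)).sub_const (φ x)).sub
      ((hasDerivAt_id t).mul_const ⟪gradient φ x, v⟫)).congr_deriv (by rw [one_mul])
  have hmajorant (t : ℝ) : HasDerivAt (fun s : ℝ => L / 2 * ‖v‖ ^ 2 * s ^ 2) (L * ‖v‖ ^ 2 * t) t :=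
    (((hasDerivAt_id t).pow 2).const_mul (L / 2 * ‖v‖ ^ 2)).congr_deriv (by simp; ring)
  have hbound : ∀ t ∈ Set.Ico (0 : ℝ) 1,
      ‖⟪gradient φ (x + t • v) - gradient φ x, v⟫‖ ≤ L * ‖v‖ ^ 2 * t := fun t ht => calc
    _ ≤ ‖gradient φ (x + t • v) - gradient φ x‖ * ‖v‖ := norm_inner_le_norm _ _
    _ ≤ L * ‖x + t • v - x‖ * ‖v‖ := by gcongr; exact hL.norm_sub_le _ _
    _ = L * ‖v‖ ^ 2 * t := by
      rw [add_sub_cancel_left, norm_smul, Real.norm_of_nonneg ht.1]; ring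
  have hle := image_norm_le_of_norm_deriv_right_le_deriv_boundary
    (fun t _ => (hremainder t).continuousAt.continuousWithinAt)
    (fun t _ => (hremainder t).hasDerivWithinAt) (by simp) hmajorant hbound
    (Set.right_mem_Icc.2 zero_le_one)
  simpa [v] using hle

lemma gradient_eq_of_forall_add_inner_le {x m : E} (hφ : DifferentiableAt ℝ φ x)
    (hm : ∀ u, φ x + ⟪m, u⟫ ≤ φ (x + u)) : gradient φ x = m := by
  have hmin : IsLocalMin (φ - ⇑(innerSL ℝ m)) x := .of_forall fun z => by
    have := hm (z - x)
    simp only [add_sub_cancel, inner_sub_right] at this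
    simp only [Pi.sub_apply, innerSL_apply_apply]
    linarith
  have hzero := hmin.hasFDerivAt_eq_zero
    (hφ.hasGradientAt.hasFDerivAt.sub (innerSL ℝ m).hasFDerivAt)
  exact (InnerProductSpace.toDual ℝ E).injective (sub_eq_zero.1 hzero)

end GradientInequalities

section LegendreTransform

variable {E : Type*} [NormedAddCommGroup E] [InnerProductSpace ℝ E] {φ : E → ℝ}

/-- The Legendre transform (convex conjugate) `y ↦ sup_x (⟪x, y⟫ - φ x)`. It is real-valued, so it
takes the junk value `0` where the supremum is infinite. -/
noncomputable def legendreTransform (φ : E → ℝ) (y : E) : ℝ := ⨆ x, (⟪x, y⟫ - φ x)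

lemma isGreatest_range_inner_sub [CompleteSpace E] (hφ : ConvexOn ℝ Set.univ φ) {x : E}
    (hd : DifferentiableAt ℝ φ x) :
    IsGreatest (Set.range fun z => ⟪z, gradient φ x⟫ - φ z) (⟪x, gradient φ x⟫ - φ x) := by
  refine ⟨⟨x, rfl⟩, ?_⟩
  rintro _ ⟨z, rfl⟩
  have := add_inner_gradient_le_of_convexOn hφ (Set.mem_univ x) (Set.mem_univ z) hd
  rw [real_inner_comm, inner_sub_left] at this
  linarith

lemma legendreTransform_gradient [CompleteSpace E] (hφ : ConvexOn ℝ Set.univ φ) {x : E}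
    (hd : DifferentiableAt ℝ φ x) :
    legendreTransform φ (gradient φ x) = ⟪x, gradient φ x⟫ - φ x :=
  (isGreatest_range_inner_sub hφ hd).csSup_eq

/-- The Fenchel-Young gap `φ x + φ^* y - ⟪x, y⟫`, which vanishes on the graph of `∇φ` when `φ` is
convex. -/
noncomputable def fenchelGap (φ : E → ℝ) (x y : E) : ℝ := φ x + legendreTransform φ y - ⟪x, y⟫

lemma fenchelGap_gradient [CompleteSpace E] (hφ : ConvexOn ℝ Set.univ φ) {x : E}
    (hd : DifferentiableAt ℝ φ x) : fenchelGap φ x (gradient φ x) = 0 := by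
  rw [fenchelGap, legendreTransform_gradient hφ hd]
  ring

lemma norm_sub_gradient_sq_le [CompleteSpace E] (hφ : Differentiable ℝ φ) {L : NNReal}
    (hL : LipschitzWith L (gradient φ)) {y : E} (hy : BddAbove (Set.range fun z => ⟪z, y⟫ - φ z))
    (x : E) :
    ‖y - gradient φ x‖ ^ 2 ≤ 2 * L * fenchelGap φ x y := by
  set w := y - gradient φ x
  set gap := fenchelGap φ x y with hgap_def
  -- Test the supremum at `x + t • w` and optimise over `t` through the discriminant.
  have hquad (t : ℝ) : 0 ≤ L * ‖w‖ ^ 2 * (t * t) + -(2 * ‖w‖ ^ 2) * t + 2 * gap := by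
    have hsup : ⟪x + t • w, y⟫ - φ (x + t • w) ≤ legendreTransform φ y := le_ciSup hy (x + t • w)
    have hdesc := (abs_le.1 (abs_sub_sub_inner_gradient_le hφ hL x (x + t • w))).2
    have hw : ⟪w, y⟫ - ⟪gradient φ x, w⟫ = ‖w‖ ^ 2 := by
      rw [real_inner_comm, ← inner_sub_left, real_inner_self_eq_norm_sq]
    rw [add_sub_cancel_left, norm_smul, mul_pow, Real.norm_eq_abs, sq_abs,
      inner_smul_right] at hdesc
    rw [inner_add_left, real_inner_smul_left] at hsup
    rw [hgap_def, fenchelGap]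
    linear_combination 2 * hsup + 2 * hdesc - 2 * t * hw
  have hgap : 0 ≤ gap := by linarith [hquad 0]
  have hdiscrim := discrim_le_zero hquad
  rw [discrim] at hdiscrim
  rcases eq_or_ne w 0 with hw | hw
  · simp only [hw, norm_zero, zero_pow two_ne_zero]; positivity
  · have : 0 < ‖w‖ ^ 2 := by positivity
    nlinarith

variable [MeasurableSpace E] [BorelSpace E] [SecondCountableTopology E]

lemma measurable_legendreTransform (hφ : Continuous φ) : Measurable (legendreTransform φ) := by
  obtain ⟨s, hs_countable, hs_dense⟩ := TopologicalSpace.exists_countable_dense E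
  have := hs_countable.to_subtype
  have hsup (y : E) : legendreTransform φ y = ⨆ x : s, (⟪(x : E), y⟫ - φ x) :=
    (hs_dense.ciSup' (by fun_prop)).symm
  simp_rw [funext hsup]
  exact Measurable.iSup fun x => by fun_prop

lemma measurableSet_bddAbove_range_inner_sub (hφ : Continuous φ) :
    MeasurableSet {y | BddAbove (Set.range fun x => ⟪x, y⟫ - φ x)} := by
  obtain ⟨s, hs_countable, hs_dense⟩ := TopologicalSpace.exists_countable_dense E
  have := hs_countable.to_subtype
  have hbdd (y : E) : BddAbove (Set.range fun x => ⟪x, y⟫ - φ x) ↔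
      BddAbove (Set.range fun x : s => ⟪(x : E), y⟫ - φ x) := by
    rw [BddAbove, BddAbove, ← hs_dense.upperBounds_image (by fun_prop), Set.image_eq_range]
  simp_rw [hbdd]
  exact measurableSet_bddAbove_range fun x => by fun_prop

end LegendreTransform

section Moments

lemma memLp_comp_of_lipschitzWith {α E F : Type*} [MeasurableSpace α] [NormedAddCommGroup E]
    [NormedAddCommGroup F] {μ : Measure α} [IsFiniteMeasure μ] {p : ENNReal} {T : E → F}
    {K : NNReal} (hT : LipschitzWith K T) {X : α → E} (hX : MemLp X p μ) : MemLp (T ∘ X) p μ := by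
  have hcentered : LipschitzWith K (fun x => T x - T 0) :=
    .of_dist_le_mul fun x y => by simpa using hT.dist_le_mul x y
  convert (hcentered.comp_memLp (sub_self _) hX).add (memLp_const (T 0)) using 1
  ext a
  simp

lemma integrable_inner_of_memLp_two {α E : Type*} [MeasurableSpace α] [NormedAddCommGroup E]
    [InnerProductSpace ℝ E] {μ : Measure α} {X Y : α → E} (hX : MemLp X 2 μ) (hY : MemLp Y 2 μ) :
    Integrable (fun a => ⟪X a, Y a⟫) μ :=
  (hX.norm.integrable_mul hY.norm).mono (AEStronglyMeasurable.inner (𝕜 := ℝ) hX.1 hY.1) <|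
    .of_forall fun a => by simpa using norm_inner_le_norm (𝕜 := ℝ) (X a) (Y a)

lemma integral_add_marginals {α β : Type*} [MeasurableSpace α] [MeasurableSpace β]
    {γ : Measure (α × β)} {c : α × β → ℝ} {u : α → ℝ} {v : β → ℝ} (hc : Integrable c γ)
    (hu : Integrable u γ.fst) (hv : Integrable v γ.snd) :
    ∫ p, (c p + u p.1 + v p.2) ∂γ = ∫ p, c p ∂γ + ∫ x, u x ∂γ.fst + ∫ y, v y ∂γ.snd := by
  have hu' : Integrable (fun p => u p.1) γ := hu.comp_measurable measurable_fst
  have hv' : Integrable (fun p => v p.2) γ := hv.comp_measurable measurable_snd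
  have hcu : Integrable (fun p => c p + u p.1) γ := hc.add hu'
  rw [integral_add hcu hv', integral_add hc hu', Measure.fst, Measure.snd,
    integral_map measurable_fst.aemeasurable hu.1, integral_map measurable_snd.aemeasurable hv.1]

end Moments

section QuadraticTransport

variable {E : Type*} [NormedAddCommGroup E] [InnerProductSpace ℝ E] [MeasurableSpace E]
  {φ : E → ℝ} {μ : Measure E} {γ : Measure (E × E)}

lemma integral_fenchelGap (hu : Integrable φ γ.fst) (hv : Integrable (legendreTransform φ) γ.snd)
    (hfst : MemLp id 2 γ.fst) (hsnd : MemLp id 2 γ.snd) :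
    ∫ p, fenchelGap φ p.1 p.2 ∂γ = ∫ p, ‖p.1 - p.2‖ ^ 2 / 2 ∂γ +
      ∫ x, (φ x - ‖x‖ ^ 2 / 2) ∂γ.fst + ∫ y, (legendreTransform φ y - ‖y‖ ^ 2 / 2) ∂γ.snd := by
  have hfst' : MemLp Prod.fst 2 γ := hfst.comp_of_map measurable_fst.aemeasurable
  have hsnd' : MemLp Prod.snd 2 γ := hsnd.comp_of_map measurable_snd.aemeasurable
  have hcost : Integrable (fun p => ‖p.1 - p.2‖ ^ 2 / 2) γ :=
    ((hfst'.sub hsnd').integrable_norm_pow two_ne_zero).div_const 2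
  have hu' : Integrable (fun x => φ x - ‖x‖ ^ 2 / 2) γ.fst :=
    hu.sub ((hfst.integrable_norm_pow two_ne_zero).div_const 2)
  have hv' : Integrable (fun y => legendreTransform φ y - ‖y‖ ^ 2 / 2) γ.snd :=
    hv.sub ((hsnd.integrable_norm_pow two_ne_zero).div_const 2)
  rw [← integral_add_marginals hcost hu' hv']
  congr with p
  rw [fenchelGap, norm_sub_sq_real]
  ring

lemma integrable_fenchelGap (hu : Integrable φ γ.fst) (hv : Integrable (legendreTransform φ) γ.snd)
    (hfst : MemLp id 2 γ.fst) (hsnd : MemLp id 2 γ.snd) :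
    Integrable (fun p => fenchelGap φ p.1 p.2) γ :=
  ((hu.comp_measurable measurable_fst).add (hv.comp_measurable measurable_snd)).sub
    (integrable_inner_of_memLp_two (hfst.comp_of_map measurable_fst.aemeasurable)
      (hsnd.comp_of_map measurable_snd.aemeasurable))

variable [CompleteSpace E] [BorelSpace E] {L : NNReal}

lemma integrable_of_lipschitzWith_gradient [IsFiniteMeasure μ] (hφ : Differentiable ℝ φ)
    (hL : LipschitzWith L (gradient φ)) (hμ : MemLp id 2 μ) : Integrable φ μ := by
  have haffine : Integrable (fun x => φ 0 + ⟪gradient φ 0, x⟫) μ :=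
    (integrable_const _).add ((hμ.integrable one_le_two).const_inner _)
  have hremainder : Integrable (fun x => φ x - (φ 0 + ⟪gradient φ 0, x⟫)) μ :=
    ((hμ.integrable_norm_pow two_ne_zero).const_mul (L / 2)).mono'
      (hφ.continuous.aestronglyMeasurable.sub haffine.1) <| .of_forall fun x => by
        simpa [sub_sub] using abs_sub_sub_inner_gradient_le hφ hL 0 x
  exact (hremainder.add haffine).congr (.of_forall fun x => sub_add_cancel _ _)

variable [SecondCountableTopology E]

lemma memLp_two_id_map_gradient [IsFiniteMeasure μ] (hL : LipschitzWith L (gradient φ))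
    (hμ : MemLp id 2 μ) : MemLp id 2 (μ.map (gradient φ)) :=
  (memLp_map_measure_iff aestronglyMeasurable_id hL.continuous.aemeasurable).2
    (memLp_comp_of_lipschitzWith hL hμ)

lemma memLp_two_snd_sub_gradient_fst [IsFiniteMeasure μ] (hL : LipschitzWith L (gradient φ))
    (hμ : MemLp id 2 μ) (hfst : γ.fst = μ) (hsnd : γ.snd = μ.map (gradient φ)) :
    MemLp (fun p => p.2 - gradient φ p.1) 2 γ := by
  have : IsFiniteMeasure γ := ⟨by rw [← Measure.fst_univ, hfst]; exact measure_lt_top μ _⟩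
  have hfst' : MemLp Prod.fst 2 γ := (hfst ▸ hμ).comp_of_map measurable_fst.aemeasurable
  have hsnd' : MemLp Prod.snd 2 γ :=
    (hsnd ▸ memLp_two_id_map_gradient hL hμ).comp_of_map measurable_snd.aemeasurable
  exact hsnd'.sub (memLp_comp_of_lipschitzWith hL hfst')

lemma integrable_legendreTransform_map_gradient [IsFiniteMeasure μ] (hc : ConvexOn ℝ Set.univ φ)
    (hφ : Differentiable ℝ φ) (hL : LipschitzWith L (gradient φ)) (hμ : MemLp id 2 μ) :
    Integrable (legendreTransform φ) (μ.map (gradient φ)) := by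
  rw [integrable_map_measure (measurable_legendreTransform hφ.continuous).aestronglyMeasurable
    hL.continuous.aemeasurable]
  have hinner : Integrable (fun x => ⟪x, gradient φ x⟫) μ :=
    integrable_inner_of_memLp_two hμ (memLp_comp_of_lipschitzWith hL hμ)
  refine (hinner.sub (integrable_of_lipschitzWith_gradient hφ hL hμ)).congr (.of_forall fun x => ?_)
  exact (legendreTransform_gradient hc (hφ x)).symm

lemma integral_fenchelGap_eq_cost_sub [IsFiniteMeasure μ] (hc : ConvexOn ℝ Set.univ φ)
    (hφ : Differentiable ℝ φ) (hL : LipschitzWith L (gradient φ)) (hμ : MemLp id 2 μ)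
    (hfst : γ.fst = μ) (hsnd : γ.snd = μ.map (gradient φ)) :
    ∫ p, fenchelGap φ p.1 p.2 ∂γ = ∫ p, ‖p.1 - p.2‖ ^ 2 / 2 ∂γ -
      ∫ p, ‖p.1 - p.2‖ ^ 2 / 2 ∂(μ.map fun x => (x, gradient φ x)) := by
  have hm : Measurable (gradient φ) := hL.continuous.measurable
  have hν := memLp_two_id_map_gradient hL hμ
  have hu := integrable_of_lipschitzWith_gradient hφ hL hμ
  have hv := integrable_legendreTransform_map_gradient hc hφ hL hμ
  set γ₀ := μ.map fun x => (x, gradient φ x) with hγ₀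
  have hfst₀ : γ₀.fst = μ := by rw [hγ₀, Measure.fst_map_prodMk hm]; exact Measure.map_id
  have hsnd₀ : γ₀.snd = μ.map (gradient φ) := Measure.snd_map_prodMk measurable_id
  have hψm := measurable_legendreTransform hφ.continuous
  have hgapm : Measurable (fun p : E × E => fenchelGap φ p.1 p.2) := by
    have := hφ.continuous.measurable
    unfold fenchelGap
    fun_prop
  have hgap₀ : ∫ p, fenchelGap φ p.1 p.2 ∂γ₀ = 0 := by
    rw [hγ₀, integral_map (by fun_prop) hgapm.aestronglyMeasurable]
    simp only [fenchelGap_gradient hc (hφ _), integral_zero]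
  rw [integral_fenchelGap (by rwa [hfst₀]) (by rwa [hsnd₀]) (by rwa [hfst₀]) (by rwa [hsnd₀]),
    hfst₀, hsnd₀] at hgap₀
  rw [integral_fenchelGap (by rwa [hfst]) (by rwa [hsnd]) (by rwa [hfst]) (by rwa [hsnd]),
    hfst, hsnd]
  linarith

theorem integral_norm_sub_gradient_sq_le_cost_sub [IsFiniteMeasure μ]
    (hc : ConvexOn ℝ Set.univ φ) (hφ : Differentiable ℝ φ) (hL : LipschitzWith L (gradient φ))
    (hμ : MemLp id 2 μ) (hfst : γ.fst = μ) (hsnd : γ.snd = μ.map (gradient φ)) :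
    ∫ p, ‖p.2 - gradient φ p.1‖ ^ 2 ∂γ ≤ 2 * L * (∫ p, ‖p.1 - p.2‖ ^ 2 / 2 ∂γ -
      ∫ p, ‖p.1 - p.2‖ ^ 2 / 2 ∂(μ.map fun x => (x, gradient φ x))) := by
  have hbdd : ∀ᵐ p ∂γ, BddAbove (Set.range fun x => ⟪x, p.2⟫ - φ x) := by
    have hbdd_snd : ∀ᵐ y ∂γ.snd, BddAbove (Set.range fun x => ⟪x, y⟫ - φ x) := by
      rw [hsnd, ae_map_iff hL.continuous.aemeasurable
        (measurableSet_bddAbove_range_inner_sub hφ.continuous)]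
      exact .of_forall fun x => (isGreatest_range_inner_sub hc (hφ x)).bddAbove
    exact ae_of_ae_map measurable_snd.aemeasurable hbdd_snd
  have hgap : Integrable (fun p => fenchelGap φ p.1 p.2) γ := by
    apply integrable_fenchelGap <;> simp only [hfst, hsnd]
    exacts [integrable_of_lipschitzWith_gradient hφ hL hμ,
      integrable_legendreTransform_map_gradient hc hφ hL hμ, hμ, memLp_two_id_map_gradient hL hμ]
  rw [← integral_fenchelGap_eq_cost_sub hc hφ hL hμ hfst hsnd, ← integral_const_mul]
  refine integral_mono_of_nonneg (.of_forall fun p => by positivity) (hgap.const_mul _) ?_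
  filter_upwards [hbdd] with p hp using norm_sub_gradient_sq_le hφ hL hp p.1

end QuadraticTransport

section Barycenters

open ProbabilityTheory

variable {E : Type*} [NormedAddCommGroup E] [NormedSpace ℝ E] [CompleteSpace E] [MeasurableSpace E]

lemma norm_integral_id_sub_sq_le {κ : Measure E} [IsProbabilityMeasure κ] {t : E}
    (ht : MemLp (fun y => y - t) 2 κ) : ‖∫ y, y ∂κ - t‖ ^ 2 ≤ ∫ y, ‖y - t‖ ^ 2 ∂κ := by
  have hsub : Integrable (fun y => y - t) κ := ht.integrable one_le_two
  have hid : Integrable (fun y => y) κ :=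
    (hsub.add (integrable_const t)).congr (.of_forall fun y => sub_add_cancel y t)
  have hmean : ∫ y, (y - t) ∂κ = ∫ y, y ∂κ - t := by simp [integral_sub hid (integrable_const t)]
  rw [← hmean]
  exact ((convexOn_norm convex_univ).pow (fun _ _ => norm_nonneg _) 2).map_integral_le
    (by fun_prop) isClosed_univ (by simp) hsub (ht.integrable_norm_pow two_ne_zero)

variable [BorelSpace E] [SecondCountableTopology E]

lemma integral_norm_barycenter_sub_sq_le {α : Type*} [MeasurableSpace α] {μ : Measure α} [SFinite μ]
    {κ : Kernel α E} [IsMarkovKernel κ] {T : α → E}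
    (hT : MemLp (fun p => p.2 - T p.1) 2 (μ.compProd κ)) :
    ∫ x, ‖∫ y, y ∂κ x - T x‖ ^ 2 ∂μ ≤ ∫ p, ‖p.2 - T p.1‖ ^ 2 ∂(μ.compProd κ) := by
  have hsq := hT.integrable_norm_pow two_ne_zero
  obtain ⟨hsection, hsection_integral⟩ := (Measure.integrable_compProd_iff hsq.1).1 hsq
  rw [Measure.integral_compProd hsq]
  refine integral_mono_of_nonneg (.of_forall fun x => by positivity)
    (by simpa using hsection_integral) ?_
  filter_upwards [hsection] with x hx
  exact norm_integral_id_sub_sq_le ((memLp_two_iff_integrable_sq_norm (by fun_prop)).2 hx)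

end Barycenters

lemma integral_nonpos_of_lintegral_exp_le_one {α : Type*} [MeasurableSpace α] {κ : Measure α}
    [IsProbabilityMeasure κ] {X : α → ℝ} (hX : Integrable X κ)
    (hexp : ∫⁻ a, ENNReal.ofReal (Real.exp (X a)) ∂κ ≤ 1) : ∫ a, X a ∂κ ≤ 0 := by
  have hpos : 0 ≤ᵐ[κ] fun a => Real.exp (X a) := .of_forall fun a => (Real.exp_pos _).le
  have hmeas : AEStronglyMeasurable (fun a => Real.exp (X a)) κ :=
    Real.continuous_exp.comp_aestronglyMeasurable hX.1
  have hint : Integrable (fun a => Real.exp (X a)) κ :=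
    (lintegral_ofReal_ne_top_iff_integrable hmeas hpos).1 (hexp.trans_lt ENNReal.one_lt_top).ne
  have hle : ∫ a, Real.exp (X a) ∂κ ≤ 1 := by
    rw [integral_eq_lintegral_of_nonneg_ae hpos hmeas]
    exact ENNReal.toReal_le_of_le_ofReal zero_le_one (by simpa using hexp)
  have hmono : ∫ a, (X a + 1) ∂κ ≤ ∫ a, Real.exp (X a) ∂κ :=
    integral_mono (hX.add (integrable_const 1)) hint fun a => Real.add_one_le_exp _
  rw [integral_add hX (integrable_const 1)] at hmono
  simp only [integral_const, probReal_univ, smul_eq_mul, mul_one] at hmono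
  linarith

section EntropicPlan

open ProbabilityTheory

variable {d : ℕ} {μ ν : Measure (EuclideanSpace ℝ (Fin d))} {ε : ℝ}
  {f g : EuclideanSpace ℝ (Fin d) → ℝ}

/-- The density of the entropic optimal plan `entPlan μ ν ε f g` with respect to `μ ⊗ ν`. -/
noncomputable def entDensity (ε : ℝ) (f g : EuclideanSpace ℝ (Fin d) → ℝ)
    (x y : EuclideanSpace ℝ (Fin d)) : ℝ :=
  Real.exp ((f x + g y - ‖x - y‖ ^ 2 / 2) / ε)

lemma entDensity_comm (x y : EuclideanSpace ℝ (Fin d)) :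
    entDensity ε f g x y = entDensity ε g f y x := by
  rw [entDensity, entDensity, add_comm, norm_sub_rev]

lemma measurable_entDensity (hf : Measurable f) (hg : Measurable g) :
    Measurable (Function.uncurry (entDensity ε f g)) := by
  unfold entDensity Function.uncurry
  fun_prop

lemma entDensity_add_left (x u y : EuclideanSpace ℝ (Fin d)) :
    entDensity ε f g (x + u) y =
      entDensity ε f g x y * Real.exp ((entPot f x - entPot f (x + u) + ⟪u, y⟫) / ε) := by
  rw [entDensity, entDensity, ← Real.exp_add, ← add_div]
  congr 2
  simp only [entPot]
  rw [add_sub_right_comm x u y, norm_add_sq_real (x - y), norm_add_sq_real x, inner_sub_left,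
    real_inner_comm u y]
  ring

lemma IsSchrodingerPair.symm (h : IsSchrodingerPair μ ν ε f g) : IsSchrodingerPair ν μ ε g f :=
  ⟨h.2.1, h.1, h.2.2.2, h.2.2.1⟩

lemma IsSchrodingerPair.lintegral_entDensity (h : IsSchrodingerPair μ ν ε f g) (hε : ε ≠ 0)
    (x : EuclideanSpace ℝ (Fin d)) : ∫⁻ y, ENNReal.ofReal (entDensity ε f g x y) ∂ν = 1 := by
  obtain ⟨hint, hpos, hf⟩ := h.2.2.1 x
  set Z := ∫ y, Real.exp ((g y - ‖x - y‖ ^ 2 / 2) / ε) ∂ν with hZ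
  have hdensity (y : EuclideanSpace ℝ (Fin d)) :
      entDensity ε f g x y = Z⁻¹ * Real.exp ((g y - ‖x - y‖ ^ 2 / 2) / ε) := by
    have hfε : f x / ε = -Real.log Z := by rw [hf]; field_simp
    rw [entDensity, add_sub_assoc, add_div, Real.exp_add, hfε, Real.exp_neg, Real.exp_log hpos]
  simp_rw [hdensity]
  rw [← ofReal_integral_eq_lintegral_ofReal (hint.const_mul _)
    (.of_forall fun y => by positivity), integral_const_mul, ← hZ, inv_mul_cancel₀ hpos.ne',
    ENNReal.ofReal_one]

/-- The conditional law of `y` given `x` under the entropic optimal plan `entPlan μ ν ε f g`. -/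
noncomputable def entKernel (ν : Measure (EuclideanSpace ℝ (Fin d))) [SFinite ν] (ε : ℝ)
    (f g : EuclideanSpace ℝ (Fin d) → ℝ) :
    Kernel (EuclideanSpace ℝ (Fin d)) (EuclideanSpace ℝ (Fin d)) :=
  (Kernel.const _ ν).withDensity
    fun x y => ENNReal.ofReal (entDensity ε f g x y)

variable [SFinite ν]

lemma lintegral_entKernel (hf : Measurable f) (hg : Measurable g) (x : EuclideanSpace ℝ (Fin d))
    {F : EuclideanSpace ℝ (Fin d) → ENNReal} (hF : Measurable F) :
    ∫⁻ y, F y ∂entKernel ν ε f g x = ∫⁻ y, ENNReal.ofReal (entDensity ε f g x y) * F y ∂ν :=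
  Kernel.lintegral_withDensity _
    (measurable_entDensity hf hg).ennreal_ofReal x hF

lemma entPlan_eq_compProd [SFinite μ] (hf : Measurable f) (hg : Measurable g) :
    entPlan μ ν ε f g = μ.compProd (entKernel ν ε f g) := by
  have : IsSFiniteKernel ((Kernel.const _ ν).withDensity
      fun x y => ENNReal.ofReal (entDensity ε f g x y)) :=
    Kernel.IsSFiniteKernel.withDensity _ fun _ _ => ENNReal.ofReal_ne_top
  rw [entKernel, Measure.compProd_withDensity (measurable_entDensity hf hg).ennreal_ofReal,
    Measure.compProd_const]
  rfl

lemma IsSchrodingerPair.isMarkovKernel_entKernel (h : IsSchrodingerPair μ ν ε f g) (hε : ε ≠ 0) :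
    IsMarkovKernel (entKernel ν ε f g) := by
  refine ⟨fun x => ⟨?_⟩⟩
  rw [← lintegral_one, lintegral_entKernel h.1 h.2.1 x measurable_const]
  simpa using h.lintegral_entDensity hε x

lemma IsSchrodingerPair.fst_entPlan [SFinite μ] (h : IsSchrodingerPair μ ν ε f g) (hε : ε ≠ 0) :
    (entPlan μ ν ε f g).fst = μ := by
  have := h.isMarkovKernel_entKernel hε
  rw [entPlan_eq_compProd h.1 h.2.1, Measure.fst_compProd]

lemma map_swap_entPlan [SFinite μ] (hf : Measurable f) (hg : Measurable g) :
    (entPlan μ ν ε f g).map Prod.swap = entPlan ν μ ε g f := by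
  ext s hs
  calc (entPlan μ ν ε f g).map Prod.swap s
    _ = ∫⁻ p in Prod.swap ⁻¹' s, ENNReal.ofReal (entDensity ε f g p.1 p.2) ∂μ.prod ν := by
      rw [Measure.map_apply measurable_swap hs]
      exact withDensity_apply _ (measurable_swap hs)
    _ = ∫⁻ p in Prod.swap ⁻¹' s,
        ENNReal.ofReal (Function.uncurry (entDensity ε g f) p.swap) ∂μ.prod ν := by
      simp_rw [entDensity_comm (f := f)]
      rfl
    _ = ∫⁻ p in s, ENNReal.ofReal (Function.uncurry (entDensity ε g f) p) ∂ν.prod μ := by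
      rw [← Measure.prod_swap (μ := μ),
        setLIntegral_map hs (measurable_entDensity hg hf).ennreal_ofReal measurable_swap]
    _ = entPlan ν μ ε g f s := (withDensity_apply _ hs).symm

lemma IsSchrodingerPair.snd_entPlan [SFinite μ] (h : IsSchrodingerPair μ ν ε f g) (hε : ε ≠ 0) :
    (entPlan μ ν ε f g).snd = ν := by
  rw [← Measure.fst_map_swap, map_swap_entPlan h.1 h.2.1, h.symm.fst_entPlan hε]

lemma IsSchrodingerPair.gradient_entPot (h : IsSchrodingerPair μ ν ε f g) (hε : 0 < ε)
    {x : EuclideanSpace ℝ (Fin d)} (hd : DifferentiableAt ℝ (entPot f) x)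
    (hint : Integrable id (entKernel ν ε f g x)) :
    gradient (entPot f) x = ∫ y, y ∂entKernel ν ε f g x := by
  have := h.isMarkovKernel_entKernel hε.ne'
  refine gradient_eq_of_forall_add_inner_le hd fun u => ?_
  have hinner : Integrable (fun y => ⟪u, y⟫) (entKernel ν ε f g x) := hint.const_inner u
  have hincrement : Integrable (fun y => entPot f x - entPot f (x + u) + ⟪u, y⟫)
      (entKernel ν ε f g x) := (integrable_const (entPot f x - entPot f (x + u))).add hinner
  -- Moving from `x` to `x + u` multiplies the density by an exponential and preserves its mass.
  have hexp : ∫⁻ y, ENNReal.ofReal (Real.exp ((entPot f x - entPot f (x + u) + ⟪u, y⟫) / ε))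
      ∂entKernel ν ε f g x ≤ 1 := by
    rw [lintegral_entKernel h.1 h.2.1 x (by fun_prop), ← h.lintegral_entDensity hε.ne' (x + u)]
    exact (lintegral_congr fun y => by
      rw [entDensity_add_left, ENNReal.ofReal_mul (p := entDensity ε f g x y)
        (Real.exp_pos _).le]).ge
  have hle := integral_nonpos_of_lintegral_exp_le_one (hincrement.div_const ε) hexp
  rw [integral_div, div_le_iff₀ hε, zero_mul, integral_add (integrable_const _) hinner,
    integral_inner (𝕜 := ℝ) (f := fun y => y) hint, integral_const, probReal_univ, one_smul] at hle
  rw [real_inner_comm]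
  linarith

lemma IsSchrodingerPair.ae_gradient_entPot [SFinite μ] (h : IsSchrodingerPair μ ν ε f g)
    (hε : 0 < ε) (hd : Differentiable ℝ (entPot f)) (hν : Integrable id ν) :
    ∀ᵐ x ∂μ, gradient (entPot f) x = ∫ y, y ∂entKernel ν ε f g x := by
  have := h.isMarkovKernel_entKernel hε.ne'
  have hsnd : Integrable Prod.snd (μ.compProd (entKernel ν ε f g)) := by
    rw [← h.snd_entPlan hε.ne', entPlan_eq_compProd h.1 h.2.1] at hν
    exact hν.comp_measurable measurable_snd
  filter_upwards [((Measure.integrable_compProd_iff hsnd.1).1 hsnd).1] with x hx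
  exact h.gradient_entPot hε (hd x) hx

end EntropicPlan

/-- the squared `L²(μ)` distance between the entropic Brenier map and the
Brenier map is bounded by `2L` times the difference of the transport costs of `π_ε`
and `π₀`. -/
theorem gradient_L2_le_cost_difference {d : ℕ}
    (μ ν : Measure (EuclideanSpace ℝ (Fin d)))
    [IsProbabilityMeasure μ] [IsProbabilityMeasure ν]
    (hμ2 : Integrable (fun x => ‖x‖ ^ 2) μ) (hν2 : Integrable (fun y => ‖y‖ ^ 2) ν)
    (φ₀ : EuclideanSpace ℝ (Fin d) → ℝ) (hφ₀ : IsBrenierPotential μ ν φ₀)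
    (L : NNReal) (hLip : LipschitzWith L (fun x => gradient φ₀ x))
    (ε : ℝ) (hε : 0 < ε)
    (f g : EuclideanSpace ℝ (Fin d) → ℝ)
    (hfg : IsSchrodingerPair μ ν ε f g)
    (hdiff : Differentiable ℝ (entPot f)) :
    (∫ x, ‖gradient (entPot f) x - gradient φ₀ x‖ ^ 2 ∂μ) ≤
      2 * (L : ℝ) *
        ((∫ p, ‖p.1 - p.2‖ ^ 2 / 2 ∂(entPlan μ ν ε f g)) -
          ∫ p, ‖p.1 - p.2‖ ^ 2 / 2
            ∂(Measure.map (fun x => (x, gradient φ₀ x)) μ)) := by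
  obtain ⟨hconvex, hφ₀, hpush⟩ := hφ₀
  have hμ : MemLp id 2 μ := (memLp_two_iff_integrable_sq_norm aestronglyMeasurable_id).2 hμ2
  have hν : MemLp id 2 ν := (memLp_two_iff_integrable_sq_norm aestronglyMeasurable_id).2 hν2
  have := hfg.isMarkovKernel_entKernel hε.ne'
  have hplan : entPlan μ ν ε f g = μ.compProd (entKernel ν ε f g) :=
    entPlan_eq_compProd hfg.1 hfg.2.1
  have hfst : (entPlan μ ν ε f g).fst = μ := hfg.fst_entPlan hε.ne'
  have hsnd : (entPlan μ ν ε f g).snd = μ.map (gradient φ₀) :=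
    (hfg.snd_entPlan hε.ne').trans hpush.symm
  calc ∫ x, ‖gradient (entPot f) x - gradient φ₀ x‖ ^ 2 ∂μ
    _ = ∫ x, ‖∫ y, y ∂entKernel ν ε f g x - gradient φ₀ x‖ ^ 2 ∂μ :=
      integral_congr_ae <| (hfg.ae_gradient_entPot hε hdiff (hν.integrable one_le_two)).mono
        fun x hx => by simp only [hx]
    _ ≤ ∫ p, ‖p.2 - gradient φ₀ p.1‖ ^ 2 ∂entPlan μ ν ε f g := by
      have hdisplacement := memLp_two_snd_sub_gradient_fst hLip hμ hfst hsnd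
      rw [hplan] at hdisplacement ⊢
      exact integral_norm_barycenter_sub_sq_le hdisplacement
    _ ≤ _ := integral_norm_sub_gradient_sq_le_cost_sub hconvex hφ₀ hLip hμ hfst hsnd
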